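/- Let X be a compact Hausdorff space and A ⊂ C(X) a unital norm-closed subalgebra. Let K ⊂ X be a subset such that: (i) K is closed; (ii) A·χ_K = C(X)·χ_K as subspaces of C(X)** (K is an A-interpolation set); (iii) χ_{x} ∈ A⊥⊥ for each x ∈ K (every point of K is an A-peak point). Then the projection χ_K ∈ C(X)** is A-null, i.e. |μ|(K) = 0 for every regular Borel measure μ on X annihilating A. -/

import Mathlib

/-!
Write `m` for the sum of the Jordan parts of an annihilating measure `μ`. The heart of the proof is
that `χ_K` lies in the closure of `A` in `L¹(m)` (`exists_approx_indicator`). Then `χ_K a` is an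
`L¹(m)`-limit of elements of `A` for every `a ∈ A`, so the restriction of `μ` to `K` annihilates
`A`; as `A` and `C(X)` have the same restrictions to `K`, it annihilates `C(X)` and so vanishes.

Two kinds of functions go into the approximation.

* Peaking functions (`exists_peak`). A positive measure representing evaluation at `x ∈ K` on `A`
  is `δ_x` by the peak point hypothesis (`representing_eq`). By Hahn–Banach and
  Riesz–Markov–Kakutani, `inf {Re a(x) : a ∈ A, Re a ≥ g} = g x` for every real continuous `g`
  (`envelope_eq`). Exponentiating suitable elements of `A` gives `p ∈ A` with `|p| ≤ 1`,
  `p(x)` close to `1` and `p` small off a given neighbourhood of `x`.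
* Varopoulos' functions (`exists_varopoulos`). The open mapping theorem gives a bound `M` for
  interpolating on `K`. For disjoint compact `Q_j ⊆ K`, averaging interpolants of the characters of
  a cyclic group gives `h_j ∈ A` with `h_j = 1` on `Q_j`, `h_j = 0` on the other pieces and
  `∑ |h_j|² ≤ M²`, a bound that does not depend on the number of pieces.

Choosing the pieces `Q_j` to exhaust `K` up to small `m`-measure, each inside a set where some
peaking function `p_j` is near `1`, the element `∑ h_j² p_j` of `A` is near `1` on `⋃ Q_j`, bounded
by `M²` everywhere, and small off a neighbourhood of `K` of almost the same `m`-measure.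
-/


noncomputable section

open MeasureTheory

variable {X : Type*} [TopologicalSpace X] [CompactSpace X] [T2Space X]
  [MeasurableSpace X] [BorelSpace X]

/-- Integration of a function against a complex measure, via the Jordan decompositions
of its real and imaginary parts. -/
def MeasureTheory.ComplexMeasure.cInt (μ : ComplexMeasure X) (f : X → ℂ) : ℂ :=
  ((∫ x, f x ∂(ComplexMeasure.re μ).toJordanDecomposition.posPart) -
      ∫ x, f x ∂(ComplexMeasure.re μ).toJordanDecomposition.negPart) +
    Complex.I * ((∫ x, f x ∂(ComplexMeasure.im μ).toJordanDecomposition.posPart) -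
      ∫ x, f x ∂(ComplexMeasure.im μ).toJordanDecomposition.negPart)

/-- A regular (complex) Borel measure: all four parts of the Jordan decompositions of
its real and imaginary parts are regular. -/
def MeasureTheory.ComplexMeasure.IsRegularCM (μ : ComplexMeasure X) : Prop :=
  (ComplexMeasure.re μ).toJordanDecomposition.posPart.Regular ∧
    (ComplexMeasure.re μ).toJordanDecomposition.negPart.Regular ∧
    (ComplexMeasure.im μ).toJordanDecomposition.posPart.Regular ∧
    (ComplexMeasure.im μ).toJordanDecomposition.negPart.Regular

open Set

/-! ### Representing measures at a peak point -/

/-- Dirac masses are regular; stated without second countability of the space. -/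
lemma regular_dirac (x : X) : (Measure.dirac x).Regular := by
  have : (Measure.dirac x).OuterRegular := by
    refine ⟨fun A _ r hr => ?_⟩
    by_cases hx : x ∈ A
    · exact ⟨univ, subset_univ _, isOpen_univ, by simpa [hx] using hr⟩
    · refine ⟨{x}ᶜ, ?_, isOpen_compl_singleton, ?_⟩
      · intro y hy h
        exact hx (by simpa using h ▸ hy)
      · simpa using (zero_le (a := _)).trans_lt hr
  refine { innerRegular := fun U hU r hr => ?_ }
  by_cases hx : x ∈ U
  · exact ⟨{x}, by simpa using hx, isCompact_singleton, by simpa [hx] using hr⟩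
  · rw [Measure.dirac_apply' _ hU.measurableSet] at hr
    simp [hx] at hr

lemma cont_integrable {E : Type*} [NormedAddCommGroup E] (ν : Measure X) [IsFiniteMeasure ν]
    (f : C(X, E)) : Integrable f ν :=
  f.continuous.integrable_of_hasCompactSupport (HasCompactSupport.of_compactSpace _)

/-- If `x` is a peak point then `δ_x` is the only positive measure representing `x` on `A`:
for a representing measure `ν`, the measure `ν - δ_x` annihilates `A`, and its Jordan parts are
`ν` restricted to the complement of `x` and `(1 - ν {x}) δ_x`. -/
lemma representing_eq (A : Subalgebra ℂ C(X, ℂ)) (x : X)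
    (hx : ∀ μ : ComplexMeasure X, μ.IsRegularCM →
      (∀ a ∈ A, μ.cInt (fun y => a y) = 0) → μ {x} = 0)
    (ν : Measure X) [IsFiniteMeasure ν] [ν.Regular]
    (hν : ∀ a ∈ A, ∫ y, a y ∂ν = a x) (g : C(X, ℝ)) : ∫ y, g y ∂ν = g x := by
  have hone : ν.real univ = 1 := by
    have := hν 1 A.one_mem
    simp only [ContinuousMap.one_apply, integral_const] at this
    simpa using this
  set c := ν.real {x} with hc
  have hc1 : c ≤ 1 := hone ▸ measureReal_mono (subset_univ _)
  let d : Measure X := ENNReal.ofReal (1 - c) • Measure.dirac x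
  have : IsFiniteMeasure d := by
    refine ⟨?_⟩
    simp [d]
  have hms : ν.restrict {x}ᶜ ⟂ₘ d := by
    refine ⟨{x}, measurableSet_singleton x, ?_, ?_⟩
    · simp [Measure.restrict_apply]
    · simp [d]
  let j : JordanDecomposition X :=
    { posPart := ν.restrict {x}ᶜ, negPart := d, mutuallySingular := hms }
  let μ : ComplexMeasure X := SignedMeasure.toComplexMeasure j.toSignedMeasure 0
  have hre : (ComplexMeasure.re μ).toJordanDecomposition = j := by
    rw [SignedMeasure.re_toComplexMeasure]
    exact JordanDecomposition.toJordanDecomposition_toSignedMeasure j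
  have him : (ComplexMeasure.im μ).toJordanDecomposition = 0 := by
    rw [SignedMeasure.im_toComplexMeasure]
    exact SignedMeasure.toJordanDecomposition_zero
  have hreg : μ.IsRegularCM := by
    refine ⟨?_, ?_, ?_, ?_⟩
    · rw [hre]
      exact Measure.Regular.restrict_of_measure_ne_top (measure_ne_top _ _)
    · rw [hre]
      have := regular_dirac x
      exact Measure.Regular.smul ENNReal.ofReal_ne_top
    · rw [him]
      exact Measure.Regular.zero
    · rw [him]
      exact Measure.Regular.zero
  have split : ∀ {E : Type _} [NormedAddCommGroup E] [NormedSpace ℝ E] [CompleteSpace E]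
      (f : C(X, E)), ∫ y in {x}ᶜ, f y ∂ν + c • f x = ∫ y, f y ∂ν := by
    intro E _ _ _ f
    rw [← integral_add_compl (measurableSet_singleton x) (cont_integrable ν f),
      integral_singleton, add_comm]
  have hann : ∀ a ∈ A, μ.cInt (fun y => a y) = 0 := by
    intro a ha
    unfold ComplexMeasure.cInt
    rw [hre, him]
    have h1 := split a
    rw [hν a ha] at h1
    have h2 : ∫ y, a y ∂d = (1 - c) • a x := by
      rw [integral_smul_measure, integral_dirac, ENNReal.toReal_ofReal (by linarith)]
    change (∫ y in {x}ᶜ, a y ∂ν - ∫ y, a y ∂d) + _ = _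
    rw [h2, eq_sub_of_add_eq h1]
    simp only [JordanDecomposition.zero_posPart, JordanDecomposition.zero_negPart,
      integral_zero_measure, sub_smul, one_smul]
    ring
  have h0 := hx μ hreg hann
  have hc_eq : c = 1 := by
    have h3 : j.toSignedMeasure {x} = 0 := by
      have := congrArg Complex.re h0
      simpa [μ, SignedMeasure.toComplexMeasure_apply] using this
    have h4 : j.toSignedMeasure {x} = (ν.restrict {x}ᶜ).real {x} - d.real {x} := by
      rw [JordanDecomposition.toSignedMeasure, sub_apply,
        Measure.toSignedMeasure_apply_measurable (measurableSet_singleton x),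
        Measure.toSignedMeasure_apply_measurable (measurableSet_singleton x)]
    have h5 : (ν.restrict {x}ᶜ).real {x} = 0 := by
      simp [measureReal_def, Measure.restrict_apply]
    have h6 : d.real {x} = 1 - c := by
      simp [measureReal_def, d, hc1]
    linarith
  have hz : ν {x}ᶜ = 0 := by
    have := measureReal_compl (μ := ν) (measurableSet_singleton x)
    rw [hone, ← hc, hc_eq, sub_self] at this
    exact (measureReal_eq_zero_iff (measure_ne_top _ _)).1 this
  have h7 := split g
  rw [Measure.restrict_eq_zero.2 hz, integral_zero_measure, zero_add, hc_eq, one_smul] at h7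
  exact h7.symm

/-! ### Peaking functions -/

/-- The upper envelope `g ↦ inf {Re a(x) : a ∈ A, Re a ≥ g}` of evaluation at `x`. -/
def envelope (A : Subalgebra ℂ C(X, ℂ)) (x : X) (g : C(X, ℝ)) : ℝ :=
  sInf {r | ∃ a ∈ A, (∀ y, g y ≤ (a y).re) ∧ (a x).re = r}

section Envelope

variable (A : Subalgebra ℂ C(X, ℂ)) (x : X)

lemma envelope_nonempty (g : C(X, ℝ)) :
    {r | ∃ a ∈ A, (∀ y, g y ≤ (a y).re) ∧ (a x).re = r}.Nonempty := by
  refine ⟨_, algebraMap ℂ _ (‖g‖ : ℂ), A.algebraMap_mem _, fun y => ?_, rfl⟩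
  simpa using (le_abs_self _).trans (g.norm_coe_le_norm y)

lemma envelope_bddBelow (g : C(X, ℝ)) :
    BddBelow {r | ∃ a ∈ A, (∀ y, g y ≤ (a y).re) ∧ (a x).re = r} := by
  refine ⟨g x, ?_⟩
  rintro _ ⟨a, -, ha, rfl⟩
  exact ha x

lemma envelope_le {g : C(X, ℝ)} {a : C(X, ℂ)} (ha : a ∈ A) (h : ∀ y, g y ≤ (a y).re) :
    envelope A x g ≤ (a x).re :=
  csInf_le (envelope_bddBelow A x g) ⟨a, ha, h, rfl⟩

lemma le_envelope (g : C(X, ℝ)) : g x ≤ envelope A x g := by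
  refine le_csInf (envelope_nonempty A x g) ?_
  rintro _ ⟨a, -, ha, rfl⟩
  exact ha x

lemma exists_lt_of_envelope_lt {g : C(X, ℝ)} {r : ℝ} (h : envelope A x g < r) :
    ∃ a ∈ A, (∀ y, g y ≤ (a y).re) ∧ (a x).re < r := by
  obtain ⟨_, ⟨a, ha, hg, rfl⟩, hr⟩ := exists_lt_of_csInf_lt (envelope_nonempty A x g) h
  exact ⟨a, ha, hg, hr⟩

lemma envelope_add (g₁ g₂ : C(X, ℝ)) :
    envelope A x (g₁ + g₂) ≤ envelope A x g₁ + envelope A x g₂ := by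
  refine le_of_forall_pos_lt_add fun ε hε => ?_
  obtain ⟨a, ha, hg, hr⟩ := exists_lt_of_envelope_lt A x
    (show envelope A x g₁ < envelope A x g₁ + ε / 2 by linarith)
  obtain ⟨b, hb, hg', hr'⟩ := exists_lt_of_envelope_lt A x
    (show envelope A x g₂ < envelope A x g₂ + ε / 2 by linarith)
  have := envelope_le A x (g := g₁ + g₂) (A.add_mem ha hb) (fun y => by
    simpa using add_le_add (hg y) (hg' y))
  simp only [ContinuousMap.add_apply, Complex.add_re] at this
  linarith

lemma envelope_smul_le {c : ℝ} (hc : 0 < c) (g : C(X, ℝ)) :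
    envelope A x (c • g) ≤ c * envelope A x g := by
  refine le_of_forall_pos_lt_add fun ε hε => ?_
  obtain ⟨a, ha, hg, hr⟩ := exists_lt_of_envelope_lt A x
    (show envelope A x g < envelope A x g + ε / c by linarith [div_pos hε hc])
  have := envelope_le A x (g := c • g) (A.smul_mem ha (c : ℂ)) (fun y => by
    simpa using mul_le_mul_of_nonneg_left (hg y) hc.le)
  simp only [ContinuousMap.smul_apply, smul_eq_mul, Complex.re_ofReal_mul] at this
  have h2 := mul_lt_mul_of_pos_left hr hc
  rw [mul_add, mul_div_cancel₀ _ hc.ne'] at h2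
  linarith

lemma envelope_smul (c : ℝ) (hc : 0 < c) (g : C(X, ℝ)) :
    envelope A x (c • g) = c * envelope A x g := by
  refine (envelope_smul_le A x hc g).antisymm ?_
  have := envelope_smul_le A x (inv_pos.2 hc) (c • g)
  rw [smul_smul, inv_mul_cancel₀ hc.ne', one_smul] at this
  have h2 := mul_le_mul_of_nonneg_left this hc.le
  rwa [← mul_assoc, mul_inv_cancel₀ hc.ne', one_mul] at h2

/-- A linear functional dominated by the envelope is integration against a positive measure
representing evaluation at `x` on `A`. -/
lemma exists_representing (L : C(X, ℝ) →ₗ[ℝ] ℝ) (hL : ∀ g, L g ≤ envelope A x g) :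
    ∃ ν : Measure X, IsFiniteMeasure ν ∧ ν.Regular ∧ (∀ g : C(X, ℝ), ∫ y, g y ∂ν = L g) ∧
      ∀ a ∈ A, ∫ y, a y ∂ν = a x := by
  have hneg : ∀ g : C(X, ℝ), g ≤ 0 → L g ≤ 0 := fun g hg =>
    (hL g).trans (by simpa using envelope_le A x A.zero_mem (fun y => by simpa using hg y))
  let Λ : CompactlySupportedContinuousMap X ℝ →ₚ[ℝ] ℝ :=
    { toFun g := L g
      map_add' g g' := L.map_add _ _
      map_smul' c g := L.map_smul _ _
      monotone' g g' hgg' := by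
        have := hneg ((g : C(X, ℝ)) - (g' : C(X, ℝ))) (fun y => by simpa using hgg' y)
        rw [map_sub] at this
        change L (g : C(X, ℝ)) ≤ L (g' : C(X, ℝ))
        linarith }
  have hint : ∀ g : C(X, ℝ), ∫ y, g y ∂(RealRMK.rieszMeasure Λ) = L g := fun g =>
    RealRMK.integral_rieszMeasure Λ (CompactlySupportedContinuousMap.continuousMapEquiv g)
  let reC : C(X, ℂ) → C(X, ℝ) := fun a => ⟨fun y => (a y).re, by fun_prop⟩
  have hle : ∀ a ∈ A, L (reC a) ≤ (a x).re := fun a ha =>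
    (hL _).trans (envelope_le A x ha fun y => le_rfl)
  have hre : ∀ a ∈ A, L (reC a) = (a x).re := by
    intro a ha
    refine (hle a ha).antisymm ?_
    have h1 := hle (-a) (A.neg_mem ha)
    have h2 : reC (-a) = - reC a := by ext y; simp [reC]
    rw [h2, map_neg] at h1
    simp only [ContinuousMap.neg_apply, Complex.neg_re] at h1
    linarith
  refine ⟨RealRMK.rieszMeasure Λ, inferInstance, inferInstance, hint, fun a ha => ?_⟩
  have hi := cont_integrable (RealRMK.rieszMeasure Λ) a
  apply Complex.ext
  · have := integral_re hi
    simp only [RCLike.re_to_complex] at this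
    rw [← this, ← hre a ha]
    exact hint (reC a)
  · have := integral_im hi
    simp only [RCLike.im_to_complex] at this
    rw [← this]
    -- the imaginary part of `a` is the real part of `-i a`
    have h1 := hre ((-Complex.I) • a) (A.smul_mem ha _)
    have h2 := hint (reC ((-Complex.I) • a))
    rw [h1] at h2
    simpa [reC] using h2

/-- At a peak point the envelope of evaluation is evaluation itself, by the Hahn–Banach theorem
and the uniqueness of the representing measure. -/
lemma envelope_eq (hx : ∀ μ : ComplexMeasure X, μ.IsRegularCM →
      (∀ a ∈ A, μ.cInt (fun y => a y) = 0) → μ {x} = 0) (g : C(X, ℝ)) :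
    envelope A x g = g x := by
  have h0 : 0 ≤ envelope A x 0 := le_envelope A x 0
  have h0' : envelope A x 0 = 0 := by
    refine le_antisymm ?_ h0
    simpa using envelope_le A x (g := 0) A.zero_mem (fun y => by simp)
  by_cases hg : g = 0
  · subst hg
    simpa using h0'
  obtain ⟨L, hLg, hL⟩ := exists_extension_of_le_sublinear
    (LinearPMap.mkSpanSingleton (K := ℝ) g (envelope A x g) hg) (envelope A x)
    (envelope_smul A x) (envelope_add A x) (by
      rintro ⟨f, hf⟩
      obtain ⟨c, rfl⟩ := Submodule.mem_span_singleton.1 hf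
      refine (LinearPMap.mkSpanSingleton'_apply g (envelope A x g) _ c hf).trans_le ?_
      change c * envelope A x g ≤ envelope A x (c • g)
      rcases lt_trichotomy c 0 with hc | rfl | hc
      · have h1 := envelope_add A x (c • g) ((-c) • g)
        rw [← add_smul, add_neg_cancel, zero_smul, envelope_smul A x (-c) (by linarith) g] at h1
        linarith
      · simpa using h0
      · rw [envelope_smul A x c hc])
  have hgL : L g = envelope A x g := by
    have := hLg ⟨g, Submodule.mem_span_singleton_self g⟩
    rw [this]
    exact LinearPMap.mkSpanSingleton_apply ℝ ℝ hg (envelope A x g)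
  obtain ⟨ν, h1, h2, h3, h4⟩ := exists_representing A x L hL
  rw [← hgL, ← h3 g]
  exact representing_eq A x hx ν h4 g

/-- Approximate peaking functions: exponentiate an element of `A` with nonpositive real part
that almost vanishes at `x` and is very negative off `U`. -/
lemma exists_peak (hA : IsClosed (A : Set C(X, ℂ))) (hx : ∀ μ : ComplexMeasure X, μ.IsRegularCM →
      (∀ a ∈ A, μ.cInt (fun y => a y) = 0) → μ {x} = 0) {U : Set X} (hU : IsOpen U)
    (hxU : x ∈ U) {ε : ℝ} (hε : 0 < ε) :
    ∃ p ∈ A, (∀ y, ‖p y‖ ≤ 1) ∧ ‖p x - 1‖ < ε ∧ ∀ y ∉ U, ‖p y‖ ≤ ε := by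
  obtain ⟨u, hu0, hu1, hu⟩ := exists_continuous_zero_one_of_isClosed
    (isClosed_singleton (x := x)) hU.isClosed_compl (by simpa using hxU)
  have h1 : envelope A x (ε⁻¹ • u) < ε := by
    rw [envelope_eq A x hx]
    simpa [hu0 rfl] using hε
  obtain ⟨a, ha, hg, hr⟩ := exists_lt_of_envelope_lt A x h1
  have hnn : ∀ y, 0 ≤ (a y).re := fun y =>
    (mul_nonneg (inv_pos.2 hε).le (hu y).1).trans (by simpa using hg y)
  let b : C(X, ℂ) := algebraMap ℂ _ (Complex.I * (a x).im) - a
  have hb : b ∈ A := A.sub_mem (A.algebraMap_mem _) ha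
  have hexp : ∀ y, (NormedSpace.exp b) y = Complex.exp (b y) := by
    intro y
    rw [Complex.exp_eq_exp_ℂ]
    exact NormedSpace.map_exp (ContinuousMap.evalAlgHom ℂ ℂ y) (continuous_eval_const y) b
  have hbre : ∀ y, (b y).re = -(a y).re := by intro y; simp [b]
  have hnorm : ∀ y, ‖(NormedSpace.exp b) y‖ = Real.exp (-(a y).re) := by
    intro y
    rw [hexp, Complex.norm_exp, hbre]
  refine ⟨NormedSpace.exp b, NormedSpace.exp_mem (R := ℂ) hA hb, fun y => ?_, ?_, fun y hy => ?_⟩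
  · rw [hnorm]
    simpa using hnn y
  · have hbx : b x = ((-(a x).re : ℝ) : ℂ) := by
      apply Complex.ext <;> simp [b]
    rw [hexp, hbx, ← Complex.ofReal_exp, ← Complex.ofReal_one, ← Complex.ofReal_sub,
      Complex.norm_real, Real.norm_eq_abs, abs_lt]
    have h2 := Real.add_one_le_exp (-(a x).re)
    have h3 : Real.exp (-(a x).re) ≤ 1 := by simpa using hnn x
    constructor <;> linarith
  · rw [hnorm, Real.exp_neg]
    have h2 : ε⁻¹ ≤ (a y).re := by
      have := hg y
      rw [ContinuousMap.smul_apply, hu1 hy] at this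
      simpa using this
    have h3 := Real.add_one_le_exp (a y).re
    exact inv_le_of_inv_le₀ hε (by linarith)

end Envelope

/-! ### Interpolation and averaging -/

/-- The interpolation constant provided by the open mapping theorem. -/
lemma exists_interp_const (A : Subalgebra ℂ C(X, ℂ)) (hA : IsClosed (A : Set C(X, ℂ)))
    (K : Set X) (hK : IsClosed K)
    (hinterp : ∀ f : C(X, ℂ), ∃ a ∈ A, ∀ x ∈ K, a x = f x) :
    ∃ M : ℝ, ∀ f : C(X, ℂ), (∀ x, ‖f x‖ ≤ 1) →
      ∃ a ∈ A, (∀ x ∈ K, a x = f x) ∧ ∀ x, ‖a x‖ ≤ M := by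
  have : CompactSpace K := isCompact_iff_compactSpace.1 hK.isCompact
  let S : Submodule ℂ C(X, ℂ) := Subalgebra.toSubmodule A
  have hS : IsClosed (S : Set C(X, ℂ)) := hA
  have : CompleteSpace S := hS.completeSpace_coe
  let ι : C(K, X) := ⟨Subtype.val, continuous_subtype_val⟩
  let R : C(X, ℂ) →L[ℂ] C(K, ℂ) :=
    ⟨(ContinuousMap.compRightAlgHom ℂ ℂ ι).toLinearMap,
      ContinuousMap.compRightAlgHom_continuous ℂ ℂ ι⟩
  let T : S →L[ℂ] C(K, ℂ) := R ∘L S.subtypeL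
  have hT : Function.Surjective T := by
    intro f
    obtain ⟨g, hg⟩ := ContinuousMap.exists_restrict_eq hK f
    obtain ⟨a, ha, hag⟩ := hinterp g
    refine ⟨⟨a, ha⟩, ?_⟩
    ext x
    rw [← hg]
    exact hag x x.2
  obtain ⟨C, hC, hCT⟩ := T.exists_preimage_norm_le hT
  refine ⟨C, fun f hf => ?_⟩
  obtain ⟨a, ha, hn⟩ := hCT (R f)
  refine ⟨a, a.2, fun x hx => congrArg (fun g : C(K, ℂ) => g ⟨x, hx⟩) ha, fun x => ?_⟩
  have h1 : ‖R f‖ ≤ 1 := (ContinuousMap.norm_le _ zero_le_one).2 fun x => hf x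
  calc ‖(a : C(X, ℂ)) x‖ ≤ ‖(a : C(X, ℂ))‖ := ContinuousMap.norm_coe_le_norm _ _
    _ ≤ C * ‖R f‖ := hn
    _ ≤ C := by nlinarith

/-- A continuous unimodular function with prescribed values on finitely many disjoint closed
sets: Urysohn functions are used to interpolate the arguments. -/
lemma exists_unimodular {ι : Type*} [Fintype ι] (Q : ι → Set X) (hQ : ∀ i, IsClosed (Q i))
    (hd : Pairwise (Function.onFun Disjoint Q)) (c : ι → ℂ) (hc : ∀ i, ‖c i‖ = 1) :
    ∃ f : C(X, ℂ), (∀ x, ‖f x‖ ≤ 1) ∧ ∀ i, ∀ x ∈ Q i, f x = c i := by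
  classical
  have key : ∀ i, ∃ u : C(X, ℝ), (∀ j, j ≠ i → ∀ x ∈ Q j, u x = 0) ∧ ∀ x ∈ Q i, u x = 1 := by
    intro i
    obtain ⟨u, h0, h1, -⟩ := exists_continuous_zero_one_of_isClosed
      (s := ⋃ j : {j // j ≠ i}, Q j) (t := Q i) (isClosed_iUnion_of_finite fun j => hQ j) (hQ i)
      (Set.disjoint_iUnion_left.2 fun j => hd j.2)
    exact ⟨u, fun j hj x hx => h0 (Set.mem_iUnion.2 ⟨⟨j, hj⟩, hx⟩), fun x hx => h1 hx⟩
  choose u hu0 hu1 using key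
  refine ⟨⟨fun x => Complex.exp ((∑ i, (c i).arg * u i x : ℝ) * Complex.I), by fun_prop⟩,
    fun x => ?_, fun i x hx => ?_⟩
  · exact (Complex.norm_exp_ofReal_mul_I _).le
  · have : ∑ j, (c j).arg * u j x = (c i).arg := by
      rw [Finset.sum_eq_single i]
      · rw [hu1 i x hx, mul_one]
      · intro j _ hj
        rw [hu0 j i hj.symm x hx, mul_zero]
      · simp
    simp only [ContinuousMap.coe_mk, this]
    have h2 := Complex.norm_mul_exp_arg_mul_I (c i)
    rwa [hc, Complex.ofReal_one, one_mul] at h2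

/-- Parseval's identity for the finite Fourier transform on `ZMod n`. -/
lemma parseval {n : ℕ} [NeZero n] (z : ZMod n → ℂ) :
    ∑ j, ‖(n : ℂ)⁻¹ * ∑ k, ZMod.stdAddChar (-(j * k)) * z k‖ ^ 2 = (n : ℝ)⁻¹ * ∑ k, ‖z k‖ ^ 2 := by
  have hn : (n : ℂ) ≠ 0 := Nat.cast_ne_zero.2 (NeZero.ne n)
  have hconj : ∀ a : ZMod n, (starRingEnd ℂ) (ZMod.stdAddChar a) = ZMod.stdAddChar (-a) :=
    fun a => (AddChar.map_neg_eq_conj _ _).symm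
  apply Complex.ofReal_injective
  push_cast
  simp_rw [← Complex.mul_conj', map_mul, map_sum, map_mul, hconj, neg_neg, map_inv₀, map_natCast]
  have h1 : ∀ j : ZMod n, ((n : ℂ)⁻¹ * ∑ k, ZMod.stdAddChar (-(j * k)) * z k) *
      ((n : ℂ)⁻¹ * ∑ l, ZMod.stdAddChar (j * l) * (starRingEnd ℂ) (z l)) =
      ∑ k, ∑ l, (n : ℂ)⁻¹ * (n : ℂ)⁻¹ * (z k * (starRingEnd ℂ) (z l)) *
        ZMod.stdAddChar (j * (l - k)) := by
    intro j
    rw [mul_mul_mul_comm, Finset.sum_mul_sum, Finset.mul_sum]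
    refine Finset.sum_congr rfl fun k _ => ?_
    rw [Finset.mul_sum]
    refine Finset.sum_congr rfl fun l _ => ?_
    rw [show j * (l - k) = j * l + -(j * k) by ring, AddChar.map_add_eq_mul]
    ring
  simp_rw [h1]
  rw [Finset.sum_comm, Finset.mul_sum]
  refine Finset.sum_congr rfl fun k _ => ?_
  rw [Finset.sum_comm]
  simp_rw [← Finset.mul_sum, AddChar.sum_mulShift _ (ZMod.isPrimitive_stdAddChar n), sub_eq_zero]
  simp only [ZMod.card, Nat.cast_ite, Nat.cast_zero, mul_ite, mul_zero, Finset.sum_ite_eq',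
    Finset.mem_univ, if_true]
  field_simp

/-- Varopoulos' averaging: given disjoint closed pieces of an interpolation set, interpolating the
characters of a cyclic group and averaging yields elements of `A` that are indicators on the pieces
and whose sum of squared moduli is bounded independently of the number of pieces. -/
lemma exists_varopoulos_zmod (A : Subalgebra ℂ C(X, ℂ)) (K : Set X) (M : ℝ)
    (hM : ∀ f : C(X, ℂ), (∀ x, ‖f x‖ ≤ 1) →
      ∃ a ∈ A, (∀ x ∈ K, a x = f x) ∧ ∀ x, ‖a x‖ ≤ M)
    {n : ℕ} [NeZero n] (Q : ZMod n → Set X) (hQ : ∀ i, IsClosed (Q i)) (hQK : ∀ i, Q i ⊆ K)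
    (hd : Pairwise (Function.onFun Disjoint Q)) :
    ∃ h : ZMod n → C(X, ℂ), (∀ j, h j ∈ A) ∧
      (∀ i j, ∀ x ∈ Q i, h j x = if i = j then 1 else 0) ∧ ∀ x, ∑ j, ‖h j x‖ ^ 2 ≤ M ^ 2 := by
  have hn : (n : ℂ) ≠ 0 := Nat.cast_ne_zero.2 (NeZero.ne n)
  have hnR : (n : ℝ) ≠ 0 := Nat.cast_ne_zero.2 (NeZero.ne n)
  have key : ∀ k : ZMod n, ∃ a ∈ A, (∀ i, ∀ x ∈ Q i, a x = ZMod.stdAddChar (i * k)) ∧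
      ∀ x, ‖a x‖ ≤ M := by
    intro k
    obtain ⟨f, hf1, hf⟩ := exists_unimodular Q hQ hd (fun i => ZMod.stdAddChar (i * k))
      (fun i => AddChar.norm_apply _ _)
    obtain ⟨a, ha, haf, haM⟩ := hM f hf1
    exact ⟨a, ha, fun i x hx => (haf x (hQK i hx)).trans (hf i x hx), haM⟩
  choose f hfA hf hfM using key
  let h : ZMod n → C(X, ℂ) := fun j =>
    (n : ℂ)⁻¹ • ∑ k, (ZMod.stdAddChar (-(j * k)) : ℂ) • f k
  have happ : ∀ j x, h j x = (n : ℂ)⁻¹ * ∑ k, ZMod.stdAddChar (-(j * k)) * f k x := by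
    intro j x
    simp [h]
  refine ⟨h, fun j => ?_, fun i j x hx => ?_, fun x => ?_⟩
  · exact A.smul_mem (A.sum_mem fun k _ => A.smul_mem (hfA k) _) _
  · have : ∀ k : ZMod n, ZMod.stdAddChar (-(j * k)) * f k x = ZMod.stdAddChar (k * (i - j)) := by
      intro k
      rw [hf k i x hx, ← AddChar.map_add_eq_mul]
      congr 1
      ring
    rw [happ]
    simp_rw [this, AddChar.sum_mulShift _ (ZMod.isPrimitive_stdAddChar n), sub_eq_zero]
    split_ifs <;> simp [hn]
  · simp_rw [happ, parseval]
    calc (n : ℝ)⁻¹ * ∑ k, ‖f k x‖ ^ 2 ≤ (n : ℝ)⁻¹ * ∑ _k : ZMod n, M ^ 2 := by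
          gcongr with k
          exact hfM k x
      _ = M ^ 2 := by
          simp [ZMod.card, hnR]

/-- `exists_varopoulos_zmod` for any finite number of pieces, including none. -/
lemma exists_varopoulos (A : Subalgebra ℂ C(X, ℂ)) (K : Set X) (M : ℝ)
    (hM : ∀ f : C(X, ℂ), (∀ x, ‖f x‖ ≤ 1) →
      ∃ a ∈ A, (∀ x ∈ K, a x = f x) ∧ ∀ x, ‖a x‖ ≤ M)
    {n : ℕ} (Q : Fin n → Set X) (hQ : ∀ i, IsClosed (Q i)) (hQK : ∀ i, Q i ⊆ K)
    (hd : Pairwise (Function.onFun Disjoint Q)) :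
    ∃ h : Fin n → C(X, ℂ), (∀ j, h j ∈ A) ∧
      (∀ i j, ∀ x ∈ Q i, h j x = if i = j then 1 else 0) ∧ ∀ x, ∑ j, ‖h j x‖ ^ 2 ≤ M ^ 2 := by
  -- for `n + 1` pieces, `ZMod (n + 1)` is by definition `Fin (n + 1)`
  cases n with
  | zero => exact ⟨fun _ => 0, fun j => j.elim0, fun i => i.elim0, fun x => by simp [sq_nonneg]⟩
  | succ n => exact exists_varopoulos_zmod A K M hM (n := n + 1) Q hQ hQK hd

/-! ### Approximating the indicator of `K` in `L¹` -/

/-- The indicator of `K` is a limit of elements of `A` in `L¹(m)`. The approximants are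
`∑ j, h j ^ 2 * p j`, with `h j` from Varopoulos' averaging on pieces of `K` where the peaking
function `p j` is close to `1`. -/
lemma exists_approx_indicator (A : Subalgebra ℂ C(X, ℂ)) (hA : IsClosed (A : Set C(X, ℂ)))
    (K : Set X) (hK : IsClosed K)
    (hinterp : ∀ f : C(X, ℂ), ∃ a ∈ A, ∀ x ∈ K, a x = f x)
    (hpeak : ∀ x ∈ K, ∀ μ : ComplexMeasure X, μ.IsRegularCM →
      (∀ a ∈ A, μ.cInt (fun y => a y) = 0) → μ {x} = 0)
    (m : Measure X) [IsFiniteMeasure m] [m.Regular] {ε : ℝ} (hε : 0 < ε) :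
    ∃ F ∈ A, ∫ x, ‖K.indicator 1 x - F x‖ ∂m ≤ ε := by
  obtain ⟨M, hM⟩ := exists_interp_const A hA K hK hinterp
  set C : ℝ := M ^ 2 + 1 with hC
  have hC0 : 0 < C := by positivity
  obtain ⟨δ, hδ, hδε⟩ : ∃ δ > 0, C * δ * (m.real univ + 2) = ε :=
    ⟨ε / (C * (m.real univ + 2)), by positivity, by field_simp⟩
  have hδ' : ENNReal.ofReal δ ≠ 0 := by simpa using hδ
  obtain ⟨U, hKU, hU, hmU⟩ := hK.isCompact.exists_isOpen_lt_add (μ := m) hδ'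
  have hmU' : m (U \ K) ≤ ENNReal.ofReal δ :=
    (measure_sdiff_lt_of_lt_add hK.measurableSet.nullMeasurableSet hKU
      (measure_ne_top _ _) hmU).le
  have hpk : ∀ x : K, ∃ p ∈ A, (∀ y, ‖p y‖ ≤ 1) ∧ ‖p x - 1‖ < δ ∧ ∀ y ∉ U, ‖p y‖ ≤ δ :=
    fun x => exists_peak A x hA (hpeak x x.2) hU (hKU x.2) hδ
  choose p hpA hp1 hpx hpU using hpk
  let V : K → Set X := fun x => {y | ‖p x y - 1‖ < δ}
  have hVo : ∀ x, IsOpen (V x) := fun x => isOpen_lt (by fun_prop) continuous_const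
  obtain ⟨t, ht⟩ := hK.isCompact.elim_finite_subcover V hVo
    (fun x hx => mem_iUnion.2 ⟨⟨x, hx⟩, hpx ⟨x, hx⟩⟩)
  let n := t.card
  let pt : Fin n → K := fun i => t.equivFin.symm i
  have hcov : K ⊆ ⋃ i, V (pt i) := by
    intro y hy
    obtain ⟨x, hx, hyx⟩ := mem_iUnion₂.1 (ht hy)
    exact mem_iUnion.2 ⟨t.equivFin ⟨x, hx⟩, by simpa [pt] using hyx⟩
  let B : Fin n → Set X := fun i => disjointed (fun i => V (pt i)) i ∩ K
  have hBm : ∀ i, MeasurableSet (B i) := fun i =>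
    (disjointedRec (p := MeasurableSet) (fun _ _ h => h.diff (hVo _).measurableSet)
      (hVo _).measurableSet).inter hK.measurableSet
  have hBK : K ⊆ ⋃ i, B i := by
    rw [← iUnion_inter, iUnion_disjointed]
    exact subset_inter hcov subset_rfl
  have hη : ENNReal.ofReal (δ / (n + 1)) ≠ 0 := by
    have : 0 < δ / (n + 1) := by positivity
    simpa using this
  have hq : ∀ i, ∃ Q ⊆ B i, IsCompact Q ∧ m (B i \ Q) < ENNReal.ofReal (δ / (n + 1)) := fun i =>
    (hBm i).exists_isCompact_sdiff_lt (measure_ne_top _ _) hη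
  choose Q hQB hQc hQm using hq
  have hQK : ∀ i, Q i ⊆ K := fun i => (hQB i).trans inter_subset_right
  have hQV : ∀ i, Q i ⊆ V (pt i) := fun i =>
    ((hQB i).trans inter_subset_left).trans (disjointed_subset _ i)
  have hQd : Pairwise (Function.onFun Disjoint Q) := fun i j hij =>
    (disjoint_disjointed (fun i => V (pt i)) hij).mono ((hQB i).trans inter_subset_left)
      ((hQB j).trans inter_subset_left)
  have hmQ : m (K \ ⋃ i, Q i) ≤ ENNReal.ofReal δ := by
    calc m (K \ ⋃ i, Q i) ≤ m (⋃ i, B i \ Q i) := by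
          refine measure_mono fun y hy => ?_
          obtain ⟨i, hi⟩ := mem_iUnion.1 (hBK hy.1)
          exact mem_iUnion.2 ⟨i, hi, fun h => hy.2 (mem_iUnion.2 ⟨i, h⟩)⟩
      _ ≤ ∑ i, m (B i \ Q i) := measure_iUnion_fintype_le _ _
      _ ≤ ∑ _i : Fin n, ENNReal.ofReal (δ / (n + 1)) := Finset.sum_le_sum fun i _ => (hQm i).le
      _ = ENNReal.ofReal (n * (δ / (n + 1))) := by
          rw [Finset.sum_const, Finset.card_univ, Fintype.card_fin, nsmul_eq_mul,
            ENNReal.ofReal_mul (by positivity), ENNReal.ofReal_natCast]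
      _ ≤ ENNReal.ofReal δ := by
          refine ENNReal.ofReal_le_ofReal ?_
          rw [mul_div_assoc', div_le_iff₀ (by positivity)]
          linarith
  obtain ⟨h, hhA, hhQ, hhM⟩ := exists_varopoulos A K M hM Q (fun i => (hQc i).isClosed) hQK hQd
  let F : C(X, ℂ) := ∑ j, h j ^ 2 * p (pt j)
  have hFA : F ∈ A := A.sum_mem fun j _ => A.mul_mem (A.pow_mem (hhA j) 2) (hpA _)
  have hFapp : ∀ y, F y = ∑ j, h j y ^ 2 * p (pt j) y := fun y => by
    simp [F, ContinuousMap.sum_apply]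
  have hFb : ∀ y r, 0 ≤ r → (∀ j, ‖p (pt j) y‖ ≤ r) → ‖F y‖ ≤ M ^ 2 * r := by
    intro y r hr0 hr
    calc ‖F y‖ ≤ ∑ j, ‖h j y ^ 2 * p (pt j) y‖ := by
          rw [hFapp]
          exact norm_sum_le _ _
      _ ≤ ∑ j, ‖h j y‖ ^ 2 * r := Finset.sum_le_sum fun j _ => by
          rw [norm_mul, norm_pow]
          gcongr
          exact hr j
      _ ≤ M ^ 2 * r := by
          rw [← Finset.sum_mul]
          exact mul_le_mul_of_nonneg_right (hhM y) hr0
  let Z : Set X := (K \ ⋃ i, Q i) ∪ (U \ K)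
  have hZm : MeasurableSet Z :=
    (hK.measurableSet.diff (MeasurableSet.iUnion fun i => (hQc i).isClosed.measurableSet)).union
      (hU.measurableSet.diff hK.measurableSet)
  have hmZ : m.real Z ≤ 2 * δ := by
    have : m Z ≤ ENNReal.ofReal (2 * δ) := by
      rw [two_mul, ENNReal.ofReal_add hδ.le hδ.le]
      exact (measure_union_le _ _).trans (add_le_add hmQ hmU')
    exact ENNReal.toReal_le_of_le_ofReal (by positivity) this
  have hpt : ∀ y, ‖K.indicator 1 y - F y‖ ≤ C * δ + Z.indicator (fun _ => C) y := by
    intro y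
    by_cases hyZ : y ∈ Z
    · rw [indicator_of_mem hyZ]
      have h1 : ‖K.indicator (1 : X → ℂ) y‖ ≤ 1 := by
        by_cases hy : y ∈ K <;> simp [hy]
      have h2 : ‖F y‖ ≤ M ^ 2 := by simpa using hFb y 1 zero_le_one fun j => hp1 _ y
      have h3 := norm_sub_le (K.indicator (1 : X → ℂ) y) (F y)
      have : 0 < C * δ := by positivity
      linarith
    · rw [indicator_of_notMem hyZ, add_zero]
      by_cases hy : y ∈ K
      · -- here `y` lies in a single piece `Q i`, and `F y = p (pt i) y`
        have : y ∈ ⋃ i, Q i := by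
          by_contra hc
          exact hyZ (Or.inl ⟨hy, hc⟩)
        obtain ⟨i, hi⟩ := mem_iUnion.1 this
        have hFy : F y = p (pt i) y := by
          rw [hFapp, Finset.sum_eq_single i]
          · rw [hhQ i i y hi]
            simp
          · intro j _ hj
            rw [hhQ i j y hi, if_neg hj.symm]
            simp
          · simp
        rw [hFy, indicator_of_mem hy, Pi.one_apply, norm_sub_rev]
        have h1 : ‖p (pt i) y - 1‖ < δ := hQV i hi
        have h2 : 0 ≤ M ^ 2 * δ := by positivity
        rw [hC]
        linarith
      · have hyU : y ∉ U := fun hc => hyZ (Or.inr ⟨hc, hy⟩)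
        have h1 := hFb y δ hδ.le fun j => hpU _ y hyU
        rw [indicator_of_notMem hy, zero_sub, norm_neg, hC]
        linarith
  refine ⟨F, hFA, ?_⟩
  have hi1 : Integrable (K.indicator (1 : X → ℂ)) m :=
    (integrable_const (1 : ℂ)).indicator hK.measurableSet
  calc ∫ x, ‖K.indicator 1 x - F x‖ ∂m
      ≤ ∫ x, (C * δ + Z.indicator (fun _ => C) x) ∂m :=
        integral_mono (hi1.sub (cont_integrable m F)).norm
          ((integrable_const _).add ((integrable_const C).indicator hZm)) hpt
    _ = m.real univ * (C * δ) + m.real Z * C := by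
        rw [integral_add (integrable_const _) ((integrable_const C).indicator hZm),
          integral_indicator_const _ hZm, integral_const]
        simp
    _ ≤ ε := by
        have := mul_le_mul_of_nonneg_right hmZ hC0.le
        rw [← hδε]
        linarith

/-! ### Integration against a complex measure -/

section ComplexMeasure

/-- The sum of the four Jordan parts of a complex measure, a finite positive measure dominating
its total variation. -/
def jordanSum (μ : ComplexMeasure X) : Measure X :=
  (ComplexMeasure.re μ).toJordanDecomposition.posPart +
    (ComplexMeasure.re μ).toJordanDecomposition.negPart +
    (ComplexMeasure.im μ).toJordanDecomposition.posPart +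
    (ComplexMeasure.im μ).toJordanDecomposition.negPart

variable (μ : ComplexMeasure X)

instance : IsFiniteMeasure (jordanSum μ) := by
  unfold jordanSum
  infer_instance

lemma jordanSum_regular (hμ : μ.IsRegularCM) : (jordanSum μ).Regular := by
  obtain ⟨h1, h2, h3, h4⟩ := hμ
  -- sums are handled through inner regularity, equivalent to regularity for finite measures
  have : (jordanSum μ).InnerRegular := by
    unfold jordanSum
    infer_instance
  infer_instance

variable {μ}

lemma integrable_parts {f : X → ℂ} (hf : Integrable f (jordanSum μ)) :
    ((Integrable f (ComplexMeasure.re μ).toJordanDecomposition.posPart ∧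
    Integrable f (ComplexMeasure.re μ).toJordanDecomposition.negPart) ∧
    Integrable f (ComplexMeasure.im μ).toJordanDecomposition.posPart) ∧
    Integrable f (ComplexMeasure.im μ).toJordanDecomposition.negPart := by
  simpa only [jordanSum, integrable_add_measure] using hf

lemma cInt_sub {f g : X → ℂ} (hf : Integrable f (jordanSum μ)) (hg : Integrable g (jordanSum μ)) :
    μ.cInt (fun x => f x - g x) = μ.cInt f - μ.cInt g := by
  obtain ⟨⟨⟨f1, f2⟩, f3⟩, f4⟩ := integrable_parts hf
  obtain ⟨⟨⟨g1, g2⟩, g3⟩, g4⟩ := integrable_parts hg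
  unfold ComplexMeasure.cInt
  rw [integral_sub f1 g1, integral_sub f2 g2, integral_sub f3 g3, integral_sub f4 g4]
  ring

lemma norm_cInt_le {f : X → ℂ} (hf : Integrable f (jordanSum μ)) :
    ‖μ.cInt f‖ ≤ ∫ x, ‖f x‖ ∂(jordanSum μ) := by
  obtain ⟨⟨⟨g1, g2⟩, g3⟩, g4⟩ := integrable_parts hf
  unfold jordanSum
  rw [integral_add_measure (integrable_add_measure.2 ⟨integrable_add_measure.2
    ⟨g1.norm, g2.norm⟩, g3.norm⟩) g4.norm,
    integral_add_measure (integrable_add_measure.2 ⟨g1.norm, g2.norm⟩) g3.norm,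
    integral_add_measure g1.norm g2.norm]
  unfold ComplexMeasure.cInt
  refine (norm_add_le _ _).trans ?_
  rw [norm_mul, Complex.norm_I, one_mul]
  have a1 := norm_sub_le (∫ x, f x ∂(ComplexMeasure.re μ).toJordanDecomposition.posPart)
    (∫ x, f x ∂(ComplexMeasure.re μ).toJordanDecomposition.negPart)
  have a2 := norm_sub_le (∫ x, f x ∂(ComplexMeasure.im μ).toJordanDecomposition.posPart)
    (∫ x, f x ∂(ComplexMeasure.im μ).toJordanDecomposition.negPart)
  have b1 := norm_integral_le_integral_norm
    (μ := (ComplexMeasure.re μ).toJordanDecomposition.posPart) f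
  have b2 := norm_integral_le_integral_norm
    (μ := (ComplexMeasure.re μ).toJordanDecomposition.negPart) f
  have b3 := norm_integral_le_integral_norm
    (μ := (ComplexMeasure.im μ).toJordanDecomposition.posPart) f
  have b4 := norm_integral_le_integral_norm
    (μ := (ComplexMeasure.im μ).toJordanDecomposition.negPart) f
  linarith

lemma cInt_indicator_one {E : Set X} (hE : MeasurableSet E) :
    μ.cInt (E.indicator 1) = μ E := by
  have key : ∀ s : SignedMeasure X, s E = s.toJordanDecomposition.posPart.real E -
      s.toJordanDecomposition.negPart.real E := by
    intro s
    conv_lhs => rw [← s.toSignedMeasure_toJordanDecomposition]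
    rw [JordanDecomposition.toSignedMeasure, sub_apply,
      Measure.toSignedMeasure_apply_measurable hE, Measure.toSignedMeasure_apply_measurable hE]
  have hi : ∀ m : Measure X, ∫ x, E.indicator (1 : X → ℂ) x ∂m = (m.real E : ℂ) := by
    intro m
    rw [integral_indicator hE]
    simp
  have h1 : (μ E).re = ComplexMeasure.re μ E := rfl
  have h2 : (μ E).im = ComplexMeasure.im μ E := rfl
  unfold ComplexMeasure.cInt
  simp only [hi]
  rw [← Complex.re_add_im (μ E), h1, h2, key, key]
  push_cast
  ring

end ComplexMeasure

/-! ### The theorem -/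

/-- Varopoulos' theorem. Let `X` be a compact Hausdorff space and
`A ⊆ C(X)` a unital norm-closed subalgebra.  Let `K ⊆ X` be such that: (i) `K` is
closed; (ii) `K` is an `A`-interpolation set (every `f ∈ C(X)` agrees on `K` with some
`a ∈ A`); (iii) every point of `K` is an `A`-peak point (`χ_{x} ∈ A^{⊥⊥}`, i.e.
`μ {x} = 0` for every regular Borel measure `μ` annihilating `A`).  Then `χ_K` is
`A`-null: `|μ|(K) = 0` (i.e. every measurable subset of `K` is `μ`-null) for every
regular Borel measure `μ` on `X` annihilating `A`. -/
theorem statement_12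
    (A : Subalgebra ℂ C(X, ℂ)) (hAclosed : IsClosed (A : Set C(X, ℂ)))
    (K : Set X) (hK : IsClosed K)
    (hinterp : ∀ f : C(X, ℂ), ∃ a ∈ A, ∀ x ∈ K, a x = f x)
    (hpeak : ∀ x ∈ K, ∀ μ : ComplexMeasure X, μ.IsRegularCM →
      (∀ a ∈ A, μ.cInt (fun y => a y) = 0) → μ {x} = 0) :
    ∀ μ : ComplexMeasure X, μ.IsRegularCM →
      (∀ a ∈ A, μ.cInt (fun y => a y) = 0) →
      ∀ E : Set X, MeasurableSet E → E ⊆ K → μ E = 0 := by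
  intro μ hμ hann E hE hEK
  have := jordanSum_regular μ hμ
  set m := jordanSum μ with hm
  have hiK : Integrable (K.indicator (1 : X → ℂ)) m :=
    (integrable_const (1 : ℂ)).indicator hK.measurableSet
  have hiE : Integrable (E.indicator (1 : X → ℂ)) m :=
    (integrable_const (1 : ℂ)).indicator hE
  have hmulK : ∀ f : X → ℂ, (fun x => f x * K.indicator 1 x) = K.indicator f := by
    intro f
    ext x
    by_cases hx : x ∈ K <;> simp [hx]
  -- the restriction of `μ` to `K` annihilates `A`: approximate `χ_K` by `F ∈ A` in `L¹`
  have hA0 : ∀ a ∈ A, μ.cInt (K.indicator a) = 0 := by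
    intro a ha
    refine norm_le_zero_iff.1 (le_of_forall_pos_le_add fun ε hε => ?_)
    obtain ⟨F, hF, hFε⟩ := exists_approx_indicator A hAclosed K hK hinterp hpeak m
      (div_pos hε (show 0 < ‖a‖ + 1 by positivity))
    have hd := hiK.sub (cont_integrable m F)
    have hi1 : Integrable (K.indicator a) m := (cont_integrable m a).indicator hK.measurableSet
    have h1 := cInt_sub hi1 (cont_integrable m (a * F))
    have h0 : μ.cInt (a * F : C(X, ℂ)) = 0 := hann _ (A.mul_mem ha hF)
    rw [h0, sub_zero] at h1
    rw [← h1, zero_add]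
    have hi2 := hi1.sub (cont_integrable m (a * F))
    calc _ ≤ ∫ x, ‖K.indicator a x - (a * F) x‖ ∂m := norm_cInt_le hi2
      _ ≤ ∫ x, (‖a‖ + 1) * ‖K.indicator 1 x - F x‖ ∂m := by
        refine integral_mono hi2.norm (hd.norm.const_mul _) fun x => ?_
        have h2 : K.indicator a x - (a * F) x = a x * (K.indicator 1 x - F x) := by
          rw [← congrFun (hmulK a) x, ContinuousMap.mul_apply]
          ring
        simp only [h2, norm_mul]
        gcongr
        exact (a.norm_coe_le_norm x).trans (by linarith)
      _ ≤ ε := by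
        rw [integral_const_mul]
        calc _ ≤ (‖a‖ + 1) * (ε / (‖a‖ + 1)) := by gcongr
          _ = ε := mul_div_cancel₀ _ (by positivity)
  -- hence it annihilates all of `C(X)`, by interpolation
  have hC0 : ∀ f : C(X, ℂ), μ.cInt (K.indicator f) = 0 := by
    intro f
    obtain ⟨a, ha, haf⟩ := hinterp f
    rw [← hA0 a ha]
    congr 1
    exact indicator_congr fun x hx => (haf x hx).symm
  rw [← cInt_indicator_one hE]
  refine norm_le_zero_iff.1 (le_of_forall_pos_le_add fun ε hε => ?_)
  obtain ⟨g, -, hgε, hgc, hgi⟩ := hiE.exists_hasCompactSupport_integral_sub_le hε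
  have hi1 : Integrable (K.indicator g) m := hgi.indicator hK.measurableSet
  have h1 := cInt_sub hiE hi1
  have h0 : μ.cInt (K.indicator g) = 0 := hC0 ⟨g, hgc⟩
  rw [h0, sub_zero] at h1
  rw [← h1, zero_add]
  have hi2 := hiE.sub hi1
  calc _ ≤ ∫ x, ‖E.indicator 1 x - K.indicator g x‖ ∂m := norm_cInt_le hi2
    _ ≤ ∫ x, ‖E.indicator 1 x - g x‖ ∂m := by
      refine integral_mono hi2.norm (hiE.sub hgi).norm fun x => ?_
      by_cases hx : x ∈ K
      · simp [hx]
      · have hxE : x ∉ E := fun h => hx (hEK h)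
        simp [hx, hxE]
    _ ≤ ε := hgε
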